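/- Consider the networked control causal factorization over a horizon T with finite alphabets. Then for every t ∈ {1,…,T−1}, every (s^t, u^t) with P(S^t = s^t, U^t = u^t) > 0, and all x_{t+1} ∈ 𝕏, y^t ∈ 𝕐^t, z^{t+1} ∈ ℤ^{t+1}: P(X_{t+1} = x_{t+1}, Y^t = y^t, Z^{t+1} = z^{t+1} | S^t = s^t, U^t = u^t) = Σ_{x_t ∈ 𝕏} P_Z(z_{t+1} | x_{t+1}) · P_X(x_{t+1} | x_t, y_t, u_t) · P_Y(y_t | y_{t-1}) · P(X_t = x_t, Y^{t-1} = y^{t-1}, Z^t = z^t | S^t = s^t, U^{t-1} = u^{t-1}), where for t = 1 the conditioning of P_Y on y_0 is vacuous. -/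

import Mathlib

open scoped BigOperators Classical

noncomputable section

namespace NCS

/-- Probability of an event under a pmf `P` on a finite sample space. -/
def pr {Ω : Type} [Fintype Ω] (P : Ω → ℝ) (E : Ω → Prop) : ℝ :=
  ∑ ω, if E ω then P ω else 0

/-- Conditional probability `P(E | F)`, as a ratio of probabilities. -/
def condPr {Ω : Type} [Fintype Ω] (P : Ω → ℝ) (E F : Ω → Prop) : ℝ :=
  pr P (fun ω => E ω ∧ F ω) / pr P F

/-- Mutual information `I(f ; g)` between two finitely-valued random variables
`f` and `g` defined on a finite sample space with pmf `P` (natural logarithm;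
summands with zero probability vanish since `0 * log _ = 0`). -/
def MI {Ω A B : Type} [Fintype Ω] [Fintype A] [Fintype B]
    (P : Ω → ℝ) (f : Ω → A) (g : Ω → B) : ℝ :=
  ∑ a : A, ∑ b : B,
    pr P (fun ω => f ω = a ∧ g ω = b) *
      Real.log (pr P (fun ω => f ω = a ∧ g ω = b) /
        (pr P (fun ω => f ω = a) * pr P (fun ω => g ω = b)))

/-- Conditional mutual information `I(f ; g | h)`. -/
def condMI {Ω A B C : Type} [Fintype Ω] [Fintype A] [Fintype B] [Fintype C]
    (P : Ω → ℝ) (f : Ω → A) (g : Ω → B) (h : Ω → C) : ℝ :=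
  ∑ a : A, ∑ b : B, ∑ c : C,
    pr P (fun ω => f ω = a ∧ g ω = b ∧ h ω = c) *
      Real.log (condPr P (fun ω => f ω = a ∧ g ω = b) (fun ω => h ω = c) /
        (condPr P (fun ω => f ω = a) (fun ω => h ω = c) *
          condPr P (fun ω => g ω = b) (fun ω => h ω = c)))


/-! ### The networked control causal factorization -/

variable {T : ℕ} {X Y Z S U : Type}

/-- The strict history `a^{t-1} = (a_1, …, a_{t-1})` of a trajectory (0-indexed). -/
def hist {A : Type} (f : Fin T → A) (t : Fin T) : Fin t.1 → A :=
  fun i => f ⟨i.1, lt_trans i.2 t.2⟩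

/-- The inclusive history `a^t = (a_1, …, a_t)` of a trajectory (0-indexed). -/
def histIncl {A : Type} (f : Fin T → A) (t : Fin T) : Fin (t.1 + 1) → A :=
  fun i => f ⟨i.1, lt_of_le_of_lt (Nat.lt_succ_iff.mp i.2) t.2⟩

/-- Drop the last entry of a history. -/
def trunc {A : Type} {n : ℕ} (f : Fin (n + 1) → A) : Fin n → A :=
  fun i => f ⟨i.1, Nat.lt_succ_of_lt i.2⟩

/-- The previous value `a_{t-1}`, or `none` at the initial time (vacuous conditioning). -/
def prevO {A : Type} (f : Fin T → A) (t : Fin T) : Option A :=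
  if t.1 = 0 then none
  else some (f ⟨t.1 - 1, lt_of_le_of_lt (Nat.sub_le _ _) t.2⟩)

/-- The previous triple `(x_{t-1}, y_{t-1}, u_{t-1})`, or `none` at the initial time. -/
def prev3 (x : Fin T → X) (y : Fin T → Y) (u : Fin T → U) (t : Fin T) :
    Option (X × Y × U) :=
  if t.1 = 0 then none
  else some (x ⟨t.1 - 1, lt_of_le_of_lt (Nat.sub_le _ _) t.2⟩,
             y ⟨t.1 - 1, lt_of_le_of_lt (Nat.sub_le _ _) t.2⟩,
             u ⟨t.1 - 1, lt_of_le_of_lt (Nat.sub_le _ _) t.2⟩)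

/-- The fixed conditional pmfs (kernels) `P_Y(y_t | y_{t-1})`,
`P_X(x_t | x_{t-1}, y_{t-1}, u_{t-1})`, `P_Z(z_t | x_t)`; conditioning on `none`
encodes the vacuous conditioning at `t = 1`. -/
structure Kernels (X Y Z U : Type) [Fintype X] [Fintype Y] [Fintype Z] [Fintype U] where
  PY : Option Y → Y → ℝ
  PX : Option (X × Y × U) → X → ℝ
  PZ : X → Z → ℝ
  PY_nonneg : ∀ p y, 0 ≤ PY p y
  PY_sum : ∀ p, ∑ y, PY p y = 1
  PX_nonneg : ∀ p x, 0 ≤ PX p x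
  PX_sum : ∀ p, ∑ x, PX p x = 1
  PZ_nonneg : ∀ x z, 0 ≤ PZ x z
  PZ_sum : ∀ x, ∑ z, PZ x z = 1

/-- A quantizer policy family `π^e_t(s_t | z^t, s^{t-1}, u^{t-1})`. -/
def QPol (T : ℕ) (Z S U : Type) : Type :=
  (t : Fin T) → (Fin (t.1 + 1) → Z) → (Fin t.1 → S) → (Fin t.1 → U) → S → ℝ

/-- A controller policy family `π^c_t(u_t | s^t, u^{t-1})`. -/
def CPol (T : ℕ) (S U : Type) : Type :=
  (t : Fin T) → (Fin (t.1 + 1) → S) → (Fin t.1 → U) → U → ℝ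

/-- `π^e` is a family of conditional pmfs. -/
def IsQPol [Fintype S] (πe : QPol T Z S U) : Prop :=
  (∀ t zs ss us st, 0 ≤ πe t zs ss us st) ∧ (∀ t zs ss us, ∑ st, πe t zs ss us st = 1)

/-- `π^c` is a family of conditional pmfs. -/
def IsCPol [Fintype U] (πc : CPol T S U) : Prop :=
  (∀ t ss us ut, 0 ≤ πc t ss us ut) ∧ (∀ t ss us, ∑ ut, πc t ss us ut = 1)

/-- The sample space of full trajectories `(x^T, y^T, z^T, s^T, u^T)`. -/
abbrev Traj (T : ℕ) (X Y Z S U : Type) : Type :=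
  (Fin T → X) × (Fin T → Y) × (Fin T → Z) × (Fin T → S) × (Fin T → U)

def trX (ω : Traj T X Y Z S U) : Fin T → X := ω.1
def trY (ω : Traj T X Y Z S U) : Fin T → Y := ω.2.1
def trZ (ω : Traj T X Y Z S U) : Fin T → Z := ω.2.2.1
def trS (ω : Traj T X Y Z S U) : Fin T → S := ω.2.2.2.1
def trU (ω : Traj T X Y Z S U) : Fin T → U := ω.2.2.2.2

variable [Fintype X] [Fintype Y] [Fintype Z] [Fintype S] [Fintype U]

/-- The joint pmf of the networked control causal factorization:
`P(x^T, y^T, z^T, s^T, u^T) = ∏_t P_Y(y_t|y_{t-1}) P_X(x_t|x_{t-1},y_{t-1},u_{t-1})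
P_Z(z_t|x_t) π^e_t(s_t|z^t,s^{t-1},u^{t-1}) π^c_t(u_t|s^t,u^{t-1})`. -/
def joint (K : Kernels X Y Z U) (πe : QPol T Z S U) (πc : CPol T S U) :
    Traj T X Y Z S U → ℝ :=
  fun (x, y, z, s, u) =>
    ∏ t : Fin T,
      K.PY (prevO y t) (y t) *
      K.PX (prev3 x y u t) (x t) *
      K.PZ (x t) (z t) *
      πe t (histIncl z t) (hist s t) (hist u t) (s t) *
      πc t (histIncl s t) (hist u t) (u t)


/-- A coordinate (lens) of a sample space. -/
structure Coord (Ω : Type) where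
  B : Type
  fin : Fintype B
  ne : Nonempty B
  get : Ω → B
  upd : Ω → B → Ω
  get_upd : ∀ ω b, get (upd ω b) = b
  upd_upd : ∀ ω b b', upd (upd ω b) b' = upd ω b'
  upd_get : ∀ ω, upd ω (get ω) = ω

attribute [instance] Coord.fin Coord.ne

theorem Coord.sum_eq {Ω : Type} [Fintype Ω] (L : Coord Ω) (F : Ω → ℝ) :
    ∑ ω, F ω = (Fintype.card L.B : ℝ)⁻¹ * ∑ ω, ∑ b, F (L.upd ω b) := by
  have hc : (Fintype.card L.B : ℝ) ≠ 0 := by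
    exact_mod_cast Fintype.card_ne_zero
  have h : ∑ p : Ω × L.B, F (L.upd p.1 p.2) = ∑ p : Ω × L.B, F p.1 := by
    let e : Ω × L.B ≃ Ω × L.B :=
      { toFun := fun p => (L.upd p.1 p.2, L.get p.1)
        invFun := fun p => (L.upd p.1 p.2, L.get p.1)
        left_inv := fun p => by simp [L.get_upd, L.upd_upd, L.upd_get]
        right_inv := fun p => by simp [L.get_upd, L.upd_upd, L.upd_get] }
    exact Fintype.sum_equiv e _ _ (fun p => rfl)
  rw [Fintype.sum_prod_type, Fintype.sum_prod_type] at h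
  rw [h]
  simp only [Finset.sum_const, Finset.card_univ, nsmul_eq_mul]
  rw [← Finset.mul_sum, ← mul_assoc, inv_mul_cancel₀ hc, one_mul]

section Chain

variable {Ω ι : Type} [Fintype Ω] [Fintype ι] (L : ι → Coord Ω) (ρ : ι → ℕ)
  (k : ι → Ω → ℝ)

/-- integrate out coordinate `i` -/
theorem chain_one (hρ : Function.Injective ρ)
    (hdep : ∀ i j, ρ i < ρ j → ∀ ω b, k i ((L j).upd ω b) = k i ω)
    (i : ι) (g : Ω → ℝ) :
    ∑ ω, (∏ j with ρ j < ρ i + 1, k j ω) * g ω =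
      (Fintype.card (L i).B : ℝ)⁻¹ * ∑ ω, (∏ j with ρ j < ρ i, k j ω) *
        ∑ b, k i ((L i).upd ω b) * g ((L i).upd ω b) := by
  rw [(L i).sum_eq]
  congr 1
  refine Finset.sum_congr rfl fun ω _ => ?_
  rw [Finset.mul_sum]
  refine Finset.sum_congr rfl fun b _ => ?_
  have hs : (Finset.univ.filter fun j => ρ j < ρ i + 1) =
      insert i (Finset.univ.filter fun j => ρ j < ρ i) := by
    ext j
    simp only [Finset.mem_filter, Finset.mem_univ, true_and, Finset.mem_insert]
    rw [Nat.lt_succ_iff, le_iff_eq_or_lt, hρ.eq_iff]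
  rw [hs, Finset.prod_insert (by simp)]
  have : ∏ j with ρ j < ρ i, k j ((L i).upd ω b) = ∏ j with ρ j < ρ i, k j ω :=
    Finset.prod_congr rfl fun j hj => hdep j i (by simpa using hj) ω b
  rw [this]
  ring

theorem chain_trunc (hρ : Function.Injective ρ)
    (hdep : ∀ i j, ρ i < ρ j → ∀ ω b, k i ((L j).upd ω b) = k i ω)
    (hsum : ∀ i ω, ∑ b, k i ((L i).upd ω b) = 1) (c : ℕ) :
    ∃ C : ℝ, ∀ g : Ω → ℝ, (∀ j, c ≤ ρ j → ∀ ω b, g ((L j).upd ω b) = g ω) →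
      ∑ ω, (∏ j, k j ω) * g ω = C * ∑ ω, (∏ j with ρ j < c, k j ω) * g ω := by
  obtain ⟨M, hM⟩ : ∃ M, ∀ j, ρ j < M :=
    ⟨(Finset.univ.sup ρ) + 1, fun j => Nat.lt_succ_of_le (Finset.le_sup (Finset.mem_univ j))⟩
  rcases le_total M c with h | h
  · refine ⟨1, fun g _ => ?_⟩
    rw [one_mul, Finset.filter_true_of_mem fun j _ => lt_of_lt_of_le (hM j) h]
  · induction h using Nat.decreasingInduction with
    | self =>
      refine ⟨1, fun g _ => ?_⟩
      rw [one_mul, Finset.filter_true_of_mem fun j _ => (hM j)]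
    | of_succ c hc ih =>
      obtain ⟨C, hC⟩ := ih
      by_cases hi : ∃ i, ρ i = c
      · obtain ⟨i, rfl⟩ := hi
        refine ⟨C * (Fintype.card (L i).B : ℝ)⁻¹, fun g hg => ?_⟩
        rw [hC g fun j hj => hg j (by omega), chain_one L ρ k hρ hdep, mul_assoc]
        congr 2
        refine Finset.sum_congr rfl fun ω _ => ?_
        simp_rw [hg i le_rfl]
        rw [← Finset.sum_mul, hsum, one_mul]
      · refine ⟨C, fun g hg => ?_⟩
        rw [hC g fun j hj => hg j (by omega)]
        have : (Finset.univ.filter fun j => ρ j < c + 1) =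
            Finset.univ.filter fun j => ρ j < c := by
          ext j
          simp only [Finset.mem_filter, Finset.mem_univ, true_and]
          have : ρ j ≠ c := fun h => hi ⟨j, h⟩
          omega
        rw [this]

theorem chain_step (hρ : Function.Injective ρ)
    (hdep : ∀ i j, ρ i < ρ j → ∀ ω b, k i ((L j).upd ω b) = k i ω)
    (hsum : ∀ i ω, ∑ b, k i ((L i).upd ω b) = 1)
    (hget : ∀ i j, ρ i < ρ j → ∀ ω b, (L i).get ((L j).upd ω b) = (L i).get ω)
    (i : ι) (a : (L i).B) (q : ℝ) (E : Ω → Prop)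
    (hE : ∀ j, ρ i ≤ ρ j → ∀ ω b, E ((L j).upd ω b) ↔ E ω)
    (hq : ∀ ω, E ω → k i ((L i).upd ω a) = q) :
    pr (fun ω => ∏ j, k j ω) (fun ω => E ω ∧ (L i).get ω = a) =
      q * pr (fun ω => ∏ j, k j ω) E := by
  obtain ⟨C, hC⟩ := chain_trunc L ρ k hρ hdep hsum (ρ i + 1)
  have e1 := hC (fun ω => if E ω ∧ (L i).get ω = a then 1 else 0) (by
    intro j hj ω b
    simp only [hE j (by omega), hget i j (by omega)])
  have e2 := hC (fun ω => if E ω then 1 else 0) (by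
    intro j hj ω b
    simp only [hE j (by omega)])
  rw [chain_one L ρ k hρ hdep] at e1 e2
  have f1 : pr (fun ω => ∏ j, k j ω) (fun ω => E ω ∧ (L i).get ω = a) =
      ∑ ω, (∏ j, k j ω) * (if E ω ∧ (L i).get ω = a then 1 else 0) := by
    unfold pr
    exact Finset.sum_congr rfl fun ω _ => by simp only [mul_ite, mul_one, mul_zero]
  have f2 : pr (fun ω => ∏ j, k j ω) E =
      ∑ ω, (∏ j, k j ω) * (if E ω then 1 else 0) := by
    unfold pr
    exact Finset.sum_congr rfl fun ω _ => by simp only [mul_ite, mul_one, mul_zero]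
  rw [f1, f2, e1, e2]
  have : ∀ a b c d : ℝ, q * (a * (b * c)) = a * (b * (q * c)) := by intros; ring
  rw [this _ _ _ 0]
  congr 2
  rw [Finset.mul_sum]
  refine Finset.sum_congr rfl fun ω _ => ?_
  simp only [hE i le_rfl, (L i).get_upd]
  by_cases h : E ω
  · simp only [h, true_and, if_true, mul_one, hsum]
    simp [hq ω h, mul_comm]
  · simp [h]

end Chain

section Upd

variable {A : Type}

theorem hist_update (f : Fin T → A) {t t' : Fin T} (h : t.1 ≤ t'.1) (b : A) :
    hist (Function.update f t' b) t = hist f t := by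
  funext i
  have := i.2
  exact Function.update_of_ne (fun e => by have := congrArg Fin.val e; simp at this; omega) _ _

theorem histIncl_update (f : Fin T → A) {t t' : Fin T} (h : t.1 < t'.1) (b : A) :
    histIncl (Function.update f t' b) t = histIncl f t := by
  funext i
  have := i.2
  exact Function.update_of_ne (fun e => by have := congrArg Fin.val e; simp at this; omega) _ _

theorem at_update (f : Fin T → A) {t t' : Fin T} (h : t.1 < t'.1) (b : A) :
    Function.update f t' b t = f t :=
  Function.update_of_ne (fun e => by have := congrArg Fin.val e; omega) _ _

theorem prevO_update (f : Fin T → A) {t t' : Fin T} (h : t.1 ≤ t'.1) (b : A) :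
    prevO (Function.update f t' b) t = prevO f t := by
  unfold prevO
  split_ifs with h0
  · rfl
  · rw [at_update]
    simp; omega

/-- option-valued combination of the three previous values -/
def comb3 : Option X → Option Y → Option U → Option (X × Y × U)
  | some x, some y, some u => some (x, y, u)
  | _, _, _ => none

theorem prev3_eq (x : Fin T → X) (y : Fin T → Y) (u : Fin T → U) (t : Fin T) :
    prev3 x y u t = comb3 (prevO x t) (prevO y t) (prevO u t) := by
  unfold prev3 prevO
  split_ifs <;> rfl

theorem histIncl_iff {t : Fin T} (f : Fin T → A) (g : Fin (t.1 + 1) → A) :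
    histIncl f t = g ↔ hist f t = trunc g ∧ f t = g (Fin.last t.1) := by
  constructor
  · rintro rfl
    exact ⟨rfl, rfl⟩
  · rintro ⟨h1, h2⟩
    funext i
    refine Fin.lastCases ?_ (fun i => ?_) i
    · exact h2
    · exact congrFun h1 i

end Upd

theorem forall_fin5 {P : Fin 5 → Prop} (h0 : P 0) (h1 : P 1) (h2 : P 2) (h3 : P 3) (h4 : P 4) :
    ∀ r, P r := by
  intro r
  fin_cases r <;> assumption

section Concrete

/-- coordinate of a function space -/
def cX [Nonempty X] (t : Fin T) : Coord (Traj T X Y Z S U) where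
  B := X
  fin := inferInstance
  ne := inferInstance
  get ω := ω.1 t
  upd ω b := (Function.update ω.1 t b, ω.2)
  get_upd ω b := by simp
  upd_upd ω b b' := by simp
  upd_get ω := by simp

def cY [Nonempty Y] (t : Fin T) : Coord (Traj T X Y Z S U) where
  B := Y
  fin := inferInstance
  ne := inferInstance
  get ω := ω.2.1 t
  upd ω b := (ω.1, Function.update ω.2.1 t b, ω.2.2)
  get_upd ω b := by simp
  upd_upd ω b b' := by simp
  upd_get ω := by simp

def cZ [Nonempty Z] (t : Fin T) : Coord (Traj T X Y Z S U) where
  B := Z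
  fin := inferInstance
  ne := inferInstance
  get ω := ω.2.2.1 t
  upd ω b := (ω.1, ω.2.1, Function.update ω.2.2.1 t b, ω.2.2.2)
  get_upd ω b := by simp
  upd_upd ω b b' := by simp
  upd_get ω := by simp

def cS [Nonempty S] (t : Fin T) : Coord (Traj T X Y Z S U) where
  B := S
  fin := inferInstance
  ne := inferInstance
  get ω := ω.2.2.2.1 t
  upd ω b := (ω.1, ω.2.1, ω.2.2.1, Function.update ω.2.2.2.1 t b, ω.2.2.2.2)
  get_upd ω b := by simp
  upd_upd ω b b' := by simp
  upd_get ω := by simp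

def cU [Nonempty U] (t : Fin T) : Coord (Traj T X Y Z S U) where
  B := U
  fin := inferInstance
  ne := inferInstance
  get ω := ω.2.2.2.2 t
  upd ω b := (ω.1, ω.2.1, ω.2.2.1, ω.2.2.2.1, Function.update ω.2.2.2.2 t b)
  get_upd ω b := by simp
  upd_upd ω b b' := by simp
  upd_get ω := by simp

variable [Nonempty X] [Nonempty Y] [Nonempty Z] [Nonempty S] [Nonempty U]

/-- All coordinates, in the causal order `x, z, s, u, y` inside each time block. -/
def cL (i : Fin T × Fin 5) : Coord (Traj T X Y Z S U) :=
  match i with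
  | (t, 0) => cX t
  | (t, 1) => cZ t
  | (t, 2) => cS t
  | (t, 3) => cU t
  | (t, 4) => cY t

theorem forall_upd (t' : Fin T) {Q : Fin 5 → Traj T X Y Z S U → Traj T X Y Z S U → Prop}
    (h0 : ∀ ω (b : X), Q 0 (Function.update ω.1 t' b, ω.2) ω)
    (h1 : ∀ ω (b : Z), Q 1 (ω.1, ω.2.1, Function.update ω.2.2.1 t' b, ω.2.2.2) ω)
    (h2 : ∀ ω (b : S), Q 2
      (ω.1, ω.2.1, ω.2.2.1, Function.update ω.2.2.2.1 t' b, ω.2.2.2.2) ω)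
    (h3 : ∀ ω (b : U), Q 3
      (ω.1, ω.2.1, ω.2.2.1, ω.2.2.2.1, Function.update ω.2.2.2.2 t' b) ω)
    (h4 : ∀ ω (b : Y), Q 4 (ω.1, Function.update ω.2.1 t' b, ω.2.2) ω) :
    ∀ r ω b, Q r ((cL (t', r)).upd ω b) ω :=
  forall_fin5 h0 h1 h2 h3 h4

/-- position of a coordinate -/
def cρ (i : Fin T × Fin 5) : ℕ := 5 * i.1.1 + i.2.1

/-- the kernels in causal order -/
def ck (K : Kernels X Y Z U) (πe : QPol T Z S U) (πc : CPol T S U)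
    (i : Fin T × Fin 5) (ω : Traj T X Y Z S U) : ℝ :=
  match i with
  | (t, 0) => K.PX (prev3 ω.1 ω.2.1 ω.2.2.2.2 t) (ω.1 t)
  | (t, 1) => K.PZ (ω.1 t) (ω.2.2.1 t)
  | (t, 2) => πe t (histIncl ω.2.2.1 t) (hist ω.2.2.2.1 t) (hist ω.2.2.2.2 t) (ω.2.2.2.1 t)
  | (t, 3) => πc t (histIncl ω.2.2.2.1 t) (hist ω.2.2.2.2 t) (ω.2.2.2.2 t)
  | (t, 4) => K.PY (prevO ω.2.1 t) (ω.2.1 t)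

theorem joint_eq (K : Kernels X Y Z U) (πe : QPol T Z S U) (πc : CPol T S U) :
    joint K πe πc = fun ω => ∏ j, ck K πe πc j ω := by
  funext ω
  obtain ⟨x, y, z, s, u⟩ := ω
  rw [Fintype.prod_prod_type]
  unfold joint
  refine Finset.prod_congr rfl fun t _ => ?_
  rw [Fin.prod_univ_five]
  simp only [ck]
  ring

theorem cρ_inj : Function.Injective (cρ (T := T)) := by
  rintro ⟨t, r⟩ ⟨t', r'⟩ h
  simp only [cρ] at h
  have := r.2
  have := r'.2
  ext <;> simp <;> omega

theorem ck_dep (K : Kernels X Y Z U) (πe : QPol T Z S U) (πc : CPol T S U) :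
    ∀ i j, cρ i < cρ j → ∀ ω b,
      ck K πe πc i ((cL (X := X) (Y := Y) (Z := Z) (S := S) (U := U) j).upd ω b) =
        ck K πe πc i ω := by
  rintro ⟨t, r⟩ ⟨t', r'⟩ h ω b
  revert h
  refine forall_upd t' (Q := fun r' ω' ω => cρ (t, r) < cρ (t', r') →
    ck K πe πc (t, r) ω' = ck K πe πc (t, r) ω) ?_ ?_ ?_ ?_ ?_ r' ω b <;>
  · intro ω b
    revert r
    refine forall_fin5 ?_ ?_ ?_ ?_ ?_ <;>
    · intro h
      simp [cρ] at h
      have h1 : t.1 ≤ t'.1 := by omega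
      try have h2 : t.1 < t'.1 := by omega
      simp only [ck, prev3_eq, hist_update _ h1, prevO_update _ h1]
      try simp only [histIncl_update _ h2, at_update _ h2]

theorem cget_dep :
    ∀ i j, cρ i < cρ j → ∀ ω b,
      (cL i).get ((cL (T := T) (X := X) (Y := Y) (Z := Z) (S := S) (U := U) j).upd ω b) =
        (cL i).get ω := by
  rintro ⟨t, r⟩ ⟨t', r'⟩ h ω b
  revert h
  refine forall_upd t' (Q := fun r' ω' ω => cρ (t, r) < cρ (t', r') →
    (cL (t, r)).get ω' = (cL (t, r)).get ω) ?_ ?_ ?_ ?_ ?_ r' ω b <;>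
  · intro ω b
    revert r
    refine forall_fin5 ?_ ?_ ?_ ?_ ?_ <;>
    · intro h
      simp [cρ] at h
      try have h2 : t.1 < t'.1 := by omega
      simp only [cL, cX, cY, cZ, cS, cU]
      try simp only [at_update _ h2]

theorem ck_sum (K : Kernels X Y Z U) (πe : QPol T Z S U) (πc : CPol T S U)
    (hπe : IsQPol πe) (hπc : IsCPol πc) :
    ∀ i ω, ∑ b, ck K πe πc i
      ((cL (X := X) (Y := Y) (Z := Z) (S := S) (U := U) i).upd ω b) = 1 := by
  rintro ⟨t, r⟩
  revert r
  refine forall_fin5 ?_ ?_ ?_ ?_ ?_ <;> intro ω <;>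
    simp only [ck, cL, cX, cY, cZ, cS, cU, prev3_eq, hist_update _ le_rfl,
      prevO_update _ le_rfl, Function.update_self]
  · exact K.PX_sum _
  · exact K.PZ_sum _
  · exact hπe.2 _ _ _ _
  · exact hπc.2 _ _ _
  · exact K.PY_sum _

theorem joint_step (K : Kernels X Y Z U) (πe : QPol T Z S U) (πc : CPol T S U)
    (hπe : IsQPol πe) (hπc : IsCPol πc)
    (i : Fin T × Fin 5) (a : (cL (X := X) (Y := Y) (Z := Z) (S := S) (U := U) i).B)
    (q : ℝ) (E : Traj T X Y Z S U → Prop)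
    (hE : ∀ j, cρ i ≤ cρ j → ∀ ω b, E ((cL j).upd ω b) ↔ E ω)
    (hq : ∀ ω, E ω → ck K πe πc i ((cL i).upd ω a) = q) :
    pr (joint K πe πc) (fun ω => E ω ∧ (cL i).get ω = a) = q * pr (joint K πe πc) E := by
  rw [joint_eq]
  exact chain_step cL cρ (ck K πe πc) cρ_inj (ck_dep K πe πc) (ck_sum K πe πc hπe hπc)
    cget_dep i a q E hE hq

end Concrete


/-- Forward belief propagation: for `t ∈ {1, …, T−1}` and
histories `(s^t, u^t)` of positive probability,
`P(X_{t+1} = x', Y^t = y^t, Z^{t+1} = z^{t+1} | S^t = s^t, U^t = u^t)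
  = Σ_{x_t} P_Z(z_{t+1} | x') · P_X(x' | x_t, y_t, u_t) · P_Y(y_t | y_{t-1}) ·
      P(X_t = x_t, Y^{t-1} = y^{t-1}, Z^t = z^t | S^t = s^t, U^{t-1} = u^{t-1})`,
with vacuous conditioning of `P_Y` at `t = 1`. -/
theorem belief_forward_propagation
    [Nonempty X] [Nonempty Y] [Nonempty Z] [Nonempty S] [Nonempty U]
    (K : Kernels X Y Z U)
    (πe : QPol T Z S U) (πc : CPol T S U) (hπe : IsQPol πe) (hπc : IsCPol πc)
    (t : Fin T) (ht : t.1 + 1 < T)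
    (sI : Fin (t.1 + 1) → S) (uI : Fin (t.1 + 1) → U)
    (hpos : 0 < pr (joint K πe πc)
      (fun ω => histIncl (trS ω) t = sI ∧ histIncl (trU ω) t = uI))
    (x' : X) (yI : Fin (t.1 + 1) → Y) (zI : Fin (t.1 + 1 + 1) → Z) :
    condPr (joint K πe πc)
      (fun ω => trX ω ⟨t.1 + 1, ht⟩ = x' ∧ histIncl (trY ω) t = yI ∧
        histIncl (trZ ω) ⟨t.1 + 1, ht⟩ = zI)
      (fun ω => histIncl (trS ω) t = sI ∧ histIncl (trU ω) t = uI) =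
    ∑ xt : X,
      K.PZ x' (zI (Fin.last (t.1 + 1))) *
      K.PX (some (xt, yI (Fin.last t.1), uI (Fin.last t.1))) x' *
      (if t.1 = 0 then K.PY none (yI (Fin.last t.1))
       else K.PY (some (yI ⟨t.1 - 1, by omega⟩)) (yI (Fin.last t.1))) *
      condPr (joint K πe πc)
        (fun ω => trX ω t = xt ∧ hist (trY ω) t = trunc yI ∧
          histIncl (trZ ω) t = trunc zI)
        (fun ω => histIncl (trS ω) t = sI ∧ hist (trU ω) t = trunc uI) := by
  classical
  set qU := πc t sI (trunc uI) (uI (Fin.last t.1)) with hqU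
  set t1 : Fin T := ⟨t.1 + 1, ht⟩ with ht1
  have hl : t.1 < t1.1 := Nat.lt_succ_self _
  set D2 := pr (joint K πe πc)
    (fun ω => histIncl (trS ω) t = sI ∧ hist (trU ω) t = trunc uI) with hD2
  -- denominators
  have hD : pr (joint K πe πc)
      (fun ω => histIncl (trS ω) t = sI ∧ histIncl (trU ω) t = uI) = qU * D2 := by
    have := joint_step K πe πc hπe hπc (t, 3) (uI (Fin.last t.1)) qU
      (fun ω => histIncl (trS ω) t = sI ∧ hist (trU ω) t = trunc uI) (by
        rintro ⟨t', r'⟩ h ω b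
        revert h
        refine forall_upd t' (Q := fun r' ω' ω => cρ (t, 3) ≤ cρ (t', r') →
          ((histIncl (trS ω') t = sI ∧ hist (trU ω') t = trunc uI) ↔
          (histIncl (trS ω) t = sI ∧ hist (trU ω) t = trunc uI))) ?_ ?_ ?_ ?_ ?_ r' ω b <;>
        · intro ω b h
          simp [cρ] at h
          have h1 : t.1 ≤ t'.1 := by omega
          try have h2 : t.1 < t'.1 := by omega
          simp only [trS, trU, hist_update _ h1]
          try simp only [histIncl_update _ h2]) (by
        rintro ω ⟨e1, e2⟩
        simp only [trS, trU] at e1 e2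
        simp only [ck, cL, cU, hist_update _ le_rfl, Function.update_self]
        rw [e1, e2])
    rw [← this]
    congr 1
    funext ω
    simp only [histIncl_iff (trU ω), and_assoc]
    rfl
  rw [hD] at hpos
  have hq0 : qU ≠ 0 := by
    rintro h
    simp [h] at hpos
  set q1 : ℝ := (if t.1 = 0 then K.PY none (yI (Fin.last t.1))
       else K.PY (some (yI ⟨t.1 - 1, by omega⟩)) (yI (Fin.last t.1))) with hq1
  -- numerators
  have hN : ∀ xt : X, pr (joint K πe πc) (fun ω =>
      (((trX ω t1 = x' ∧ histIncl (trY ω) t = yI ∧ histIncl (trZ ω) t1 = zI) ∧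
        (histIncl (trS ω) t = sI ∧ histIncl (trU ω) t = uI)) ∧ trX ω t = xt)) =
      K.PZ x' (zI (Fin.last (t.1 + 1))) *
      (K.PX (some (xt, yI (Fin.last t.1), uI (Fin.last t.1))) x' * (q1 * (qU *
        pr (joint K πe πc) (fun ω => (trX ω t = xt ∧ hist (trY ω) t = trunc yI ∧
          histIncl (trZ ω) t = trunc zI) ∧
          (histIncl (trS ω) t = sI ∧ hist (trU ω) t = trunc uI))))) := by
    intro xt
    set E0 : Traj T X Y Z S U → Prop := fun ω => (trX ω t = xt ∧ hist (trY ω) t = trunc yI ∧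
          histIncl (trZ ω) t = trunc zI) ∧
          (histIncl (trS ω) t = sI ∧ hist (trU ω) t = trunc uI) with hE0
    have a1 := joint_step K πe πc hπe hπc (t, 3) (uI (Fin.last t.1)) qU E0 (by
        rintro ⟨t', r'⟩ h ω b
        revert h
        refine forall_upd t' (Q := fun r' ω' ω => cρ (t, 3) ≤ cρ (t', r') →
          (E0 ω' ↔ E0 ω)) ?_ ?_ ?_ ?_ ?_ r' ω b <;>
        · intro ω b h
          simp [cρ] at h
          have h1 : t.1 ≤ t'.1 := by omega
          try have h2 : t.1 < t'.1 := by omega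
          simp only [E0, trX, trY, trZ, trS, trU, hist_update _ h1]
          try simp only [histIncl_update _ h2, at_update _ h2]) (by
        rintro ω ⟨-, e1, e2⟩
        simp only [trS, trU] at e1 e2
        simp only [ck, cL, cU, hist_update _ le_rfl, Function.update_self]
        rw [e1, e2])
    set E1 : Traj T X Y Z S U → Prop := fun ω => E0 ω ∧ trU ω t = uI (Fin.last t.1) with hE1
    have a2 := joint_step K πe πc hπe hπc (t, 4) (yI (Fin.last t.1)) q1 E1 (by
        rintro ⟨t', r'⟩ h ω b
        revert h
        refine forall_upd t' (Q := fun r' ω' ω => cρ (t, 4) ≤ cρ (t', r') →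
          (E1 ω' ↔ E1 ω)) ?_ ?_ ?_ ?_ ?_ r' ω b <;>
        · intro ω b h
          simp [cρ] at h
          have h1 : t.1 ≤ t'.1 := by omega
          try have h2 : t.1 < t'.1 := by omega
          simp only [E1, E0, trX, trY, trZ, trS, trU, hist_update _ h1]
          try simp only [histIncl_update _ h2, at_update _ h2]) (by
        rintro ω ⟨⟨⟨-, e1, -⟩, -⟩, -⟩
        simp only [trY] at e1
        simp only [ck, cL, cY, prevO_update _ le_rfl, Function.update_self, hq1]
        simp only [prevO]
        split_ifs with h0
        · rfl
        · have := congrFun e1 ⟨t.1 - 1, by omega⟩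
          simp only [hist, trunc] at this
          rw [this])
    set E2 : Traj T X Y Z S U → Prop := fun ω => E1 ω ∧ trY ω t = yI (Fin.last t.1) with hE2
    have a3 := joint_step K πe πc hπe hπc (t1, 0) x'
      (K.PX (some (xt, yI (Fin.last t.1), uI (Fin.last t.1))) x') E2 (by
        rintro ⟨t', r'⟩ h ω b
        revert h
        refine forall_upd t' (Q := fun r' ω' ω => cρ (t1, 0) ≤ cρ (t', r') →
          (E2 ω' ↔ E2 ω)) ?_ ?_ ?_ ?_ ?_ r' ω b <;>
        · intro ω b h
          simp [cρ] at h
          have h2 : t.1 < t'.1 := by omega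
          simp only [E2, E1, E0, trX, trY, trZ, trS, trU, hist_update _ h2.le,
            histIncl_update _ h2, at_update _ h2]) (by
        rintro ω ⟨⟨⟨⟨e1, -⟩, -⟩, e2⟩, e3⟩
        simp only [trX, trY, trU] at e1 e2 e3
        simp only [ck, cL, cX, prev3_eq, prevO_update _ le_rfl, Function.update_self]
        rw [← prev3_eq]
        have : prev3 ω.1 ω.2.1 ω.2.2.2.2 t1 = some (ω.1 t, ω.2.1 t, ω.2.2.2.2 t) := by
          simp [prev3, t1]
        rw [this, e1, e2, e3])
    set E3 : Traj T X Y Z S U → Prop := fun ω => E2 ω ∧ trX ω t1 = x' with hE3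
    have a4 := joint_step K πe πc hπe hπc (t1, 1) (zI (Fin.last (t.1 + 1)))
      (K.PZ x' (zI (Fin.last (t.1 + 1)))) E3 (by
        rintro ⟨t', r'⟩ h ω b
        revert h
        refine forall_upd t' (Q := fun r' ω' ω => cρ (t1, 1) ≤ cρ (t', r') →
          (E3 ω' ↔ E3 ω)) ?_ ?_ ?_ ?_ ?_ r' ω b <;>
        · intro ω b h
          simp [cρ] at h
          have h2 : t.1 < t'.1 := by omega
          try have h3 : t1.1 < t'.1 := by omega
          simp only [E3, E2, E1, E0, trX, trY, trZ, trS, trU, hist_update _ h2.le,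
            histIncl_update _ h2, at_update _ h2]
          try simp only [at_update _ h3]) (by
        rintro ω ⟨-, e1⟩
        simp only [trX] at e1
        simp only [ck, cL, cZ, Function.update_self]
        rw [e1])
    rw [← a1, show pr (joint K πe πc) (fun ω => E0 ω ∧ (cL (t, 3)).get ω = uI (Fin.last t.1))
        = pr (joint K πe πc) E1 from rfl, ← a2,
      show pr (joint K πe πc) (fun ω => E1 ω ∧ (cL (t, 4)).get ω = yI (Fin.last t.1))
        = pr (joint K πe πc) E2 from rfl, ← a3,
      show pr (joint K πe πc) (fun ω => E2 ω ∧ (cL (t1, 0)).get ω = x')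
        = pr (joint K πe πc) E3 from rfl, ← a4]
    congr 1
    funext ω
    have hz : (histIncl (trZ ω) t1 = zI) ↔ histIncl (trZ ω) t = trunc zI ∧
      (cL (t1, 1)).get ω = zI (Fin.last (t.1 + 1)) := histIncl_iff (t := t1) (trZ ω) zI
    rw [hz]
    simp only [histIncl_iff (trU ω), histIncl_iff (trY ω), E3, E2, E1, E0, eq_iff_iff]
    tauto
  have hsplit : pr (joint K πe πc) (fun ω =>
      ((trX ω t1 = x' ∧ histIncl (trY ω) t = yI ∧ histIncl (trZ ω) t1 = zI) ∧
        (histIncl (trS ω) t = sI ∧ histIncl (trU ω) t = uI))) =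
      ∑ xt : X, pr (joint K πe πc) (fun ω =>
      (((trX ω t1 = x' ∧ histIncl (trY ω) t = yI ∧ histIncl (trZ ω) t1 = zI) ∧
        (histIncl (trS ω) t = sI ∧ histIncl (trU ω) t = uI)) ∧ trX ω t = xt)) := by
    unfold pr
    rw [Finset.sum_comm]
    refine Finset.sum_congr rfl fun ω _ => ?_
    by_cases h : ((trX ω t1 = x' ∧ histIncl (trY ω) t = yI ∧ histIncl (trZ ω) t1 = zI) ∧
        (histIncl (trS ω) t = sI ∧ histIncl (trU ω) t = uI))
    · simp only [eq_true h, true_and, if_true]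
      simp
    · simp only [eq_false h, false_and, if_false]
      simp
  unfold condPr
  rw [hsplit, hD, Finset.sum_div]
  refine Finset.sum_congr rfl fun xt _ => ?_
  rw [hN xt, ← hD2]
  rw [show ∀ a b c d : ℝ, a * (b * (c * (qU * d))) = qU * (a * b * c * d) by intros; ring,
    mul_div_mul_left _ _ hq0, mul_div_assoc]

end NCS
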